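/- The set of 8-satisfactory colorings of K_8 — functions c : K_8 → {1,…,8} with c(i) = i for all i ∈ {1,…,8} such that for every a ∈ K_8 and all integers i, j with 1 ≤ i < j ≤ 8, c(ia) ≠ c(ja) — has the cardinality of the continuum, 2^{ℵ₀}. -/

import Mathlib

/-- The `n`-core: the set of `n`-smooth positive integers. -/
def Kcore (n : ℕ) : Set ℕ := {m : ℕ | 0 < m ∧ ∀ p : ℕ, p.Prime → p ∣ m → p ≤ n}

/-- `c : K_n → {1,…,n}` is an `n`-satisfactory coloring of `K_n`, normalized by
`c i = i` for `i ∈ {1,…,n}`. -/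
def IsSatisfactoryOnCore (n : ℕ) (c : ↥(Kcore n) → ℕ) : Prop :=
  (∀ x : ↥(Kcore n), (x : ℕ) ≤ n → c x = (x : ℕ)) ∧
  (∀ x : ↥(Kcore n), c x ∈ Finset.Icc 1 n) ∧
  (∀ a : ↥(Kcore n), ∀ i j : ℕ, 1 ≤ i → i < j → j ≤ n →
    ∀ x y : ↥(Kcore n), (x : ℕ) = i * (a : ℕ) → (y : ℕ) = j * (a : ℕ) →
      c x ≠ c y)

/-- Total number of prime factors 3, 5, 7. -/
noncomputable def wt (x : ℕ) : ℕ := x.factorization 3 + x.factorization 5 + x.factorization 7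

/-- Base exponent. -/
noncomputable def bs (x : ℕ) : ℕ :=
  x.factorization 2 + 2 * x.factorization 5 + 3 * x.factorization 7

lemma wt_mul {x y : ℕ} (hx : x ≠ 0) (hy : y ≠ 0) : wt (x * y) = wt x + wt y := by
  simp only [wt, Nat.factorization_mul hx hy, Finsupp.add_apply]; ring

lemma bs_mul {x y : ℕ} (hx : x ≠ 0) (hy : y ≠ 0) : bs (x * y) = bs x + bs y := by
  simp only [bs, Nat.factorization_mul hx hy, Finsupp.add_apply]; ring

lemma wb1 : wt 1 = 0 ∧ bs 1 = 0 := by simp [wt, bs]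
lemma wb2 : wt 2 = 0 ∧ bs 2 = 1 := by
  simp [wt, bs, Nat.Prime.factorization Nat.prime_two]
lemma wb3 : wt 3 = 1 ∧ bs 3 = 0 := by
  simp [wt, bs, Nat.Prime.factorization Nat.prime_three]
lemma wb5 : wt 5 = 1 ∧ bs 5 = 2 := by
  simp [wt, bs, Nat.Prime.factorization Nat.prime_five]
lemma wb7 : wt 7 = 1 ∧ bs 7 = 3 := by
  simp [wt, bs, Nat.Prime.factorization (show Nat.Prime 7 by norm_num)]
lemma wb4 : wt 4 = 0 ∧ bs 4 = 2 := by
  rw [show 4 = 2 * 2 from rfl, wt_mul (by simp) (by simp), bs_mul (by simp) (by simp)]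
  simp [wb2]
lemma wb8 : wt 8 = 0 ∧ bs 8 = 3 := by
  rw [show 8 = 2 * 4 from rfl, wt_mul (by simp) (by simp), bs_mul (by simp) (by simp)]
  simp [wb2, wb4]
lemma wb6 : wt 6 = 1 ∧ bs 6 = 1 := by
  rw [show 6 = 2 * 3 from rfl, wt_mul (by simp) (by simp), bs_mul (by simp) (by simp)]
  simp [wb2, wb3]

/-- Names of the elements of the group `Z/4 × Z/2`. -/
def tab (e o : ℕ) : ℕ :=
  if o = 0 then (if e = 0 then 1 else if e = 1 then 2 else if e = 2 then 4 else 8)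
  else (if e = 0 then 3 else if e = 1 then 6 else if e = 2 then 5 else 7)

lemma tab_inj {e o e' o' : ℕ} (he : e < 4) (ho : o < 2) (he' : e' < 4) (ho' : o' < 2)
    (h : tab e o = tab e' o') : e = e' ∧ o = o' := by
  interval_cases e <;> interval_cases o <;> interval_cases e' <;> interval_cases o' <;>
    simp [tab] at h ⊢

lemma tab_mem (e o : ℕ) : tab e o ∈ Finset.Icc 1 8 := by
  unfold tab; split_ifs <;> simp

/-- The switch on each level. -/
def sw (f : ℕ → Bool) : ℕ → ℕ
  | 0 => 0
  | 1 => 0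
  | k + 2 => if f k then 1 else 0

/-- The coloring attached to `f`. -/
noncomputable def col (f : ℕ → Bool) (x : ℕ) : ℕ :=
  tab ((bs x + 2 * sw f (wt x)) % 4) (wt x % 2)

lemma small (i : ℕ) (h1 : 1 ≤ i) (h8 : i ≤ 8) :
    tab (bs i) (wt i) = i ∧ bs i < 4 ∧ wt i < 2 := by
  interval_cases i <;>
    simp [wb1, wb2, wb3, wb4, wb5, wb6, wb7, wb8, tab]

lemma col_small (f : ℕ → Bool) (i : ℕ) (h1 : 1 ≤ i) (h8 : i ≤ 8) : col f i = i := by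
  obtain ⟨h, hb, hw⟩ := small i h1 h8
  have hs : sw f (wt i) = 0 := by
    generalize wt i = w at hw
    interval_cases w <;> rfl
  rw [col, hs, mul_zero, add_zero, Nat.mod_eq_of_lt hb, Nat.mod_eq_of_lt hw, h]

lemma col_ne (f : ℕ → Bool) (a i j : ℕ) (ha : a ≠ 0) (hi : 1 ≤ i) (hij : i < j) (hj : j ≤ 8) :
    col f (i * a) ≠ col f (j * a) := by
  intro h
  obtain ⟨ti, bi, wi⟩ := small i hi (by omega)
  obtain ⟨tj, bj, wj⟩ := small j (by omega) hj
  unfold col at h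
  obtain ⟨h1, h2⟩ := tab_inj (Nat.mod_lt _ (by norm_num)) (Nat.mod_lt _ (by norm_num))
    (Nat.mod_lt _ (by norm_num)) (Nat.mod_lt _ (by norm_num)) h
  rw [wt_mul (by omega) ha, wt_mul (by omega) ha] at h1 h2
  rw [bs_mul (by omega) ha, bs_mul (by omega) ha] at h1
  have hw : wt i = wt j := by omega
  rw [hw] at h1
  have hb : bs i = bs j := by omega
  rw [hw, hb, tj] at ti
  omega

lemma wt_pow (k : ℕ) : wt (3 ^ k) = k ∧ bs (3 ^ k) = 0 := by
  simp [wt, bs, Nat.Prime.factorization Nat.prime_three]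

lemma three_pow_mem (k : ℕ) : 3 ^ k ∈ Kcore 8 := by
  refine ⟨by positivity, fun p hp h => ?_⟩
  have := Nat.le_of_dvd (by norm_num) (hp.dvd_of_dvd_pow h)
  omega

/-- The family of colorings. -/
noncomputable def fam (f : ℕ → Bool) : {c : ↥(Kcore 8) → ℕ // IsSatisfactoryOnCore 8 c} :=
  ⟨fun x => col f x, fun x hx => col_small f x x.2.1 hx, fun _ => tab_mem _ _, by
    intro a i j hi hij hj x y hx hy
    simp only [hx, hy]
    exact col_ne f a i j a.2.1.ne' hi hij hj⟩

lemma fam_inj : Function.Injective fam := by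
  intro f g h
  funext k
  have h1 : col f (3 ^ (k + 2)) = col g (3 ^ (k + 2)) :=
    congrFun (congrArg Subtype.val h) ⟨3 ^ (k + 2), three_pow_mem _⟩
  unfold col at h1
  obtain ⟨h2, -⟩ := tab_inj (Nat.mod_lt _ (by norm_num)) (Nat.mod_lt _ (by norm_num))
    (Nat.mod_lt _ (by norm_num)) (Nat.mod_lt _ (by norm_num)) h1
  rw [(wt_pow _).1, (wt_pow _).2] at h2
  simp only [sw] at h2
  cases hf : f k <;> cases hg : g k <;> simp [hf, hg] at h2 ⊢

/-- The set of 8-satisfactory colorings of `K_8` has the cardinality of the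
continuum. -/
theorem continuum_many_eight_colorings :
    Cardinal.mk {c : ↥(Kcore 8) → ℕ // IsSatisfactoryOnCore 8 c} =
      Cardinal.continuum := by
  apply le_antisymm
  · calc Cardinal.mk {c : ↥(Kcore 8) → ℕ // IsSatisfactoryOnCore 8 c}
        ≤ Cardinal.mk (↥(Kcore 8) → ℕ) := Cardinal.mk_subtype_le _
      _ = Cardinal.aleph0 ^ Cardinal.mk ↥(Kcore 8) := by simp
      _ ≤ Cardinal.aleph0 ^ Cardinal.aleph0 :=
        Cardinal.power_le_power_left Cardinal.aleph0_ne_zero Cardinal.mk_le_aleph0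
      _ = Cardinal.continuum := Cardinal.aleph0_power_aleph0
  · have := Cardinal.mk_le_of_injective fam_inj
    simpa using this
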